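/- (Product-rate bias bound for the AIPW score.) For all bounded measurable g1, g0 : 𝒳 → ℝ and all measurable m : 𝒳 → ℝ with ε ≤ m ≤ 1 − ε, the expected AIPW score satisfies |E[ψ(g1, g0, m)]| ≤ ε^{-1} · ‖(m − m₀) ∘ X‖_{L²(P)} · (‖(g1 − g₀1) ∘ X‖_{L²(P)} + ‖(g0 − g₀0) ∘ X‖_{L²(P)}); i.e. the bias is controlled by the product of the L² estimation errors of the propensity score and the outcome regressions. -/

import Mathlib

open MeasureTheory

/-!
The two arms of the AIPW score are mirror images under `D ↦ 1 - D`, `m ↦ 1 - m`, so one arm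
suffices. Conditioning on the covariates replaces `D * Y` by `m₀ * g₀` and `D` by `m₀`, which turns
the bias of an arm into the mixed-bias integral `∫ m⁻¹ * (m - m₀) * (g - g₀)`. The first-order
errors have cancelled; overlap bounds `m⁻¹`, and Cauchy–Schwarz separates the two remaining factors.
-/

section General

variable {Ω : Type*} {𝒢 mΩ : MeasurableSpace Ω} {μ : Measure Ω}

theorem memLp_of_eq_zero_or_one [IsFiniteMeasure μ] {f : Ω → ℝ} (hf : AEStronglyMeasurable f μ)
    (hf01 : ∀ᵐ ω ∂μ, f ω = 0 ∨ f ω = 1) (p : ENNReal) : MemLp f p μ :=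
  have h_mem : ∀ᵐ ω ∂μ, f ω ∈ Set.Icc (0 : ℝ) 1 := hf01.mono fun ω hω => by
    rcases hω with h | h <;> simp [h]
  memLp_of_bounded h_mem hf p

theorem memLp_comp_of_abs_le [IsFiniteMeasure μ] {𝓧 : Type*} [MeasurableSpace 𝓧] {X : Ω → 𝓧}
    (hX : Measurable X) {f : 𝓧 → ℝ} (hf : Measurable f) {C : ℝ} (hC : ∀ x, |f x| ≤ C)
    (p : ENNReal) : MemLp (fun ω => f (X ω)) p μ :=
  .of_bound (hf.comp hX).aestronglyMeasurable C (.of_forall fun ω => hC (X ω))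

theorem ae_abs_inv_le {f : Ω → ℝ} {ε : ℝ} (hε : 0 < ε) (hf : ∀ᵐ ω ∂μ, ε ≤ f ω) :
    ∀ᵐ ω ∂μ, |f⁻¹ ω| ≤ ε⁻¹ :=
  hf.mono fun ω hω => by
    rw [Pi.inv_apply, abs_of_pos (inv_pos.2 (hε.trans_le hω))]
    exact inv_anti₀ hε hω

theorem integral_abs_mul_abs_le_sqrt_mul_sqrt {f g : Ω → ℝ} (hf : MemLp f 2 μ) (hg : MemLp g 2 μ) :
    ∫ ω, |f ω| * |g ω| ∂μ ≤ √(∫ ω, f ω ^ 2 ∂μ) * √(∫ ω, g ω ^ 2 ∂μ) := by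
  simpa [Real.sqrt_eq_rpow] using integral_mul_norm_le_Lp_mul_Lq (f := f) (g := g)
    Real.HolderConjugate.two_two (by simpa using hf) (by simpa using hg)

theorem abs_integral_mul_mul_le {w f g : Ω → ℝ} {c : ℝ} (hw : ∀ᵐ ω ∂μ, |w ω| ≤ c)
    (hc : 0 ≤ c) (hf : MemLp f 2 μ) (hg : MemLp g 2 μ) :
    |∫ ω, w ω * (f ω * g ω) ∂μ| ≤ c * (√(∫ ω, f ω ^ 2 ∂μ) * √(∫ ω, g ω ^ 2 ∂μ)) := by
  have h_int : Integrable (fun ω => c * (|f ω| * |g ω|)) μ :=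
    (hf.abs.integrable_mul hg.abs).const_mul c
  calc |∫ ω, w ω * (f ω * g ω) ∂μ|
      ≤ ∫ ω, c * (|f ω| * |g ω|) ∂μ := by
        have h_bound : ∀ᵐ ω ∂μ, ‖w ω * (f ω * g ω)‖ ≤ c * (|f ω| * |g ω|) := hw.mono fun ω hω => by
          rw [Real.norm_eq_abs, abs_mul, abs_mul]
          gcongr
        exact norm_integral_le_of_norm_le h_int h_bound
    _ = c * ∫ ω, |f ω| * |g ω| ∂μ := integral_const_mul _ _
    _ ≤ c * (√(∫ ω, f ω ^ 2 ∂μ) * √(∫ ω, g ω ^ 2 ∂μ)) := by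
        gcongr
        exact integral_abs_mul_abs_le_sqrt_mul_sqrt hf hg

theorem integral_mul_eq_of_ae_eq_condExp (h𝒢 : 𝒢 ≤ mΩ) [SigmaFinite (μ.trim h𝒢)]
    {h Z k : Ω → ℝ} (hh : AEStronglyMeasurable[𝒢] h μ) (hZ : Integrable Z μ)
    (hhZ : Integrable (h * Z) μ) (hk : k =ᵐ[μ] μ[Z | 𝒢]) :
    ∫ ω, h ω * Z ω ∂μ = ∫ ω, h ω * k ω ∂μ := by
  have h_pull : μ[h * Z | 𝒢] =ᵐ[μ] h * k :=
    (condExp_mul_of_aestronglyMeasurable_left hh hhZ hZ).trans (hk.symm.mono fun ω hω => by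
      simp only [Pi.mul_apply, hω])
  exact (integral_condExp h𝒢).symm.trans (integral_congr_ae h_pull)

theorem one_sub_ae_eq_condExp_one_sub [IsFiniteMeasure μ] (h𝒢 : 𝒢 ≤ mΩ) {Z k : Ω → ℝ}
    (hZ : Integrable Z μ) (hk : k =ᵐ[μ] μ[Z | 𝒢]) : 1 - k =ᵐ[μ] μ[1 - Z | 𝒢] := by
  have h_one : μ[(1 : Ω → ℝ) | 𝒢] = 1 := condExp_const h𝒢 1
  filter_upwards [hk, condExp_sub (integrable_const (1 : ℝ)) hZ 𝒢] with ω hω h_sub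
  calc (1 - k) ω = (μ[(1 : Ω → ℝ) | 𝒢] - μ[Z | 𝒢]) ω := by simp only [Pi.sub_apply, h_one, hω]
    _ = μ[1 - Z | 𝒢] ω := h_sub.symm

end General

/-- The one-arm AIPW score for the mean outcome of the arm with treatment variable `A`, outcome
`Y`, propensity score `m` and outcome regression `g`. The nuisances are functions on `Ω`, to be
thought of as already composed with the covariates. -/
noncomputable def armScore {Ω : Type*} (A Y m g : Ω → ℝ) (ω : Ω) : ℝ :=
  g ω + A ω / m ω * (Y ω - g ω)

section Arm

variable {Ω : Type*} {𝒢 mΩ : MeasurableSpace Ω} {P : Measure Ω} {A Y m m₀ g g₀ : Ω → ℝ} {ε : ℝ}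

theorem armScore_eq_add_sub : armScore A Y m g = g + m⁻¹ * (A * Y) - m⁻¹ * (g * A) := by
  ext ω
  simp only [armScore, Pi.add_apply, Pi.sub_apply, Pi.mul_apply, Pi.inv_apply]
  ring

theorem integrable_armScore (hm : AEStronglyMeasurable m P) (hε : 0 < ε)
    (hmε : ∀ᵐ ω ∂P, ε ≤ m ω) (hAY : Integrable (A * Y) P) (hg : Integrable g P)
    (hgA : Integrable (g * A) P) : Integrable (armScore A Y m g) P := by
  have hw := ae_abs_inv_le hε hmε
  have hm_inv : AEStronglyMeasurable m⁻¹ P := hm.inv₀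
  rw [armScore_eq_add_sub]
  exact (hg.add (hAY.bdd_mul hm_inv hw)).sub (hgA.bdd_mul hm_inv hw)

theorem integral_armScore_sub_integral (h𝒢 : 𝒢 ≤ mΩ) [SigmaFinite (P.trim h𝒢)]
    (hm : AEStronglyMeasurable[𝒢] m P) (hε : 0 < ε) (hmε : ∀ᵐ ω ∂P, ε ≤ m ω)
    (hA : Integrable A P) (hAY : Integrable (A * Y) P)
    (hm₀ : m₀ =ᵐ[P] P[A | 𝒢]) (hg₀ : m₀ * g₀ =ᵐ[P] P[A * Y | 𝒢]) (hg₀_int : Integrable g₀ P)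
    (hg : AEStronglyMeasurable[𝒢] g P) (hg_int : Integrable g P) (hgA : Integrable (g * A) P)
    (hgm₀ : Integrable (g * m₀) P) :
    ∫ ω, armScore A Y m g ω ∂P - ∫ ω, g₀ ω ∂P
      = ∫ ω, (m ω)⁻¹ * ((m ω - m₀ ω) * (g ω - g₀ ω)) ∂P := by
  have hw := ae_abs_inv_le hε hmε
  have hm_inv : AEStronglyMeasurable[𝒢] m⁻¹ P := hm.inv₀
  have bdd_mul {f : Ω → ℝ} (hf : Integrable f P) : Integrable (m⁻¹ * f) P :=
    hf.bdd_mul (hm_inv.mono h𝒢) hw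
  have hm₀g₀ : Integrable (m₀ * g₀) P := integrable_condExp.congr hg₀.symm
  have h_outcome : ∫ ω, (m⁻¹ * (A * Y)) ω ∂P = ∫ ω, (m⁻¹ * (m₀ * g₀)) ω ∂P :=
    integral_mul_eq_of_ae_eq_condExp h𝒢 hm_inv hAY (bdd_mul hAY) hg₀
  have h_treatment : ∫ ω, (m⁻¹ * (g * A)) ω ∂P = ∫ ω, (m⁻¹ * (g * m₀)) ω ∂P := by
    simp only [← mul_assoc]
    exact integral_mul_eq_of_ae_eq_condExp h𝒢 (hm_inv.mul hg) hA
      (by simpa only [mul_assoc] using bdd_mul hgA) hm₀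
  calc ∫ ω, armScore A Y m g ω ∂P - ∫ ω, g₀ ω ∂P
      = ∫ ω, (g + m⁻¹ * (m₀ * g₀) - m⁻¹ * (g * m₀) - g₀) ω ∂P := by
        rw [armScore_eq_add_sub, integral_sub' (hg_int.add (bdd_mul hAY)) (bdd_mul hgA),
          integral_add' hg_int (bdd_mul hAY), h_outcome, h_treatment,
          integral_sub' ((hg_int.add (bdd_mul hm₀g₀)).sub (bdd_mul hgm₀)) hg₀_int,
          integral_sub' (hg_int.add (bdd_mul hm₀g₀)) (bdd_mul hgm₀),
          integral_add' hg_int (bdd_mul hm₀g₀)]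
    _ = ∫ ω, (m ω)⁻¹ * ((m ω - m₀ ω) * (g ω - g₀ ω)) ∂P := by
        refine integral_congr_ae (hmε.mono fun ω hω => ?_)
        have hm_ne : m ω ≠ 0 := (hε.trans_le hω).ne'
        simp only [Pi.add_apply, Pi.sub_apply, Pi.mul_apply, Pi.inv_apply]
        field_simp
        ring

theorem abs_integral_armScore_sub_integral_le [IsFiniteMeasure P] (h𝒢 : 𝒢 ≤ mΩ)
    (hm : AEStronglyMeasurable[𝒢] m P) (hm_mem : MemLp m 2 P) (hε : 0 < ε)
    (hmε : ∀ᵐ ω ∂P, ε ≤ m ω) (hA : MemLp A 2 P) (hAY : Integrable (A * Y) P)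
    (hm₀ : m₀ =ᵐ[P] P[A | 𝒢]) (hg₀ : m₀ * g₀ =ᵐ[P] P[A * Y | 𝒢]) (hg₀_mem : MemLp g₀ 2 P)
    (hg : AEStronglyMeasurable[𝒢] g P) (hg_mem : MemLp g 2 P) :
    |∫ ω, armScore A Y m g ω ∂P - ∫ ω, g₀ ω ∂P|
      ≤ ε⁻¹ * (√(∫ ω, (m ω - m₀ ω) ^ 2 ∂P) * √(∫ ω, (g ω - g₀ ω) ^ 2 ∂P)) := by
  have hm₀_mem : MemLp m₀ 2 P := (hA.condExp one_le_two).ae_eq hm₀.symm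
  rw [integral_armScore_sub_integral h𝒢 hm hε hmε (hA.integrable one_le_two) hAY hm₀ hg₀
    (hg₀_mem.integrable one_le_two) hg (hg_mem.integrable one_le_two) (hg_mem.integrable_mul hA)
    (hg_mem.integrable_mul hm₀_mem)]
  exact abs_integral_mul_mul_le (ae_abs_inv_le hε hmε) (inv_nonneg.2 hε.le) (hm_mem.sub hm₀_mem)
    (hg_mem.sub hg₀_mem)

theorem integral_aipw_eq_sub [IsProbabilityMeasure P] {D g1 g0 : Ω → ℝ}
    (h1 : Integrable (armScore D Y m g1) P) (h0 : Integrable (armScore (1 - D) Y (1 - m) g0) P)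
    (θ : ℝ) :
    ∫ ω, ((g1 ω - g0 ω) + (D ω / m ω) * (Y ω - g1 ω)
        - ((1 - D ω) / (1 - m ω)) * (Y ω - g0 ω) - θ) ∂P
      = ∫ ω, armScore D Y m g1 ω ∂P - ∫ ω, armScore (1 - D) Y (1 - m) g0 ω ∂P - θ := by
  calc _ = ∫ ω, (armScore D Y m g1 ω - armScore (1 - D) Y (1 - m) g0 ω - θ) ∂P := by
        congr 1 with ω
        simp only [armScore, Pi.sub_apply, Pi.one_apply]
        ring
    _ = _ := by
        have h_diff : Integrable
            (fun ω => armScore D Y m g1 ω - armScore (1 - D) Y (1 - m) g0 ω) P := h1.sub h0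
        rw [integral_sub h_diff (integrable_const θ), integral_sub h1 h0, integral_const,
          probReal_univ, one_smul]

end Arm

theorem aipw_product_rate_bias_bound_general
    {Ω : Type*} {𝒢 mΩ : MeasurableSpace Ω} {P : Measure Ω} [IsProbabilityMeasure P] (h𝒢 : 𝒢 ≤ mΩ)
    {D Y : Ω → ℝ} (hD : MemLp D 2 P) (hDY : Integrable (D * Y) P)
    (hDY' : Integrable ((1 - D) * Y) P)
    {m₀ g₀1 g₀0 : Ω → ℝ} (hm₀ : m₀ =ᵐ[P] P[D | 𝒢])
    (hg₀1 : m₀ * g₀1 =ᵐ[P] P[D * Y | 𝒢]) (hg₀0 : (1 - m₀) * g₀0 =ᵐ[P] P[(1 - D) * Y | 𝒢])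
    (hg₀1_mem : MemLp g₀1 2 P) (hg₀0_mem : MemLp g₀0 2 P)
    {θ₀ : ℝ} (hθ₀ : θ₀ = ∫ ω, (g₀1 ω - g₀0 ω) ∂P)
    {g1 g0 m : Ω → ℝ} (hg1 : AEStronglyMeasurable[𝒢] g1 P) (hg0 : AEStronglyMeasurable[𝒢] g0 P)
    (hg1_mem : MemLp g1 2 P) (hg0_mem : MemLp g0 2 P)
    {ε : ℝ} (hε : 0 < ε) (hm : AEStronglyMeasurable[𝒢] m P)
    (hmε : ∀ᵐ ω ∂P, m ω ∈ Set.Icc ε (1 - ε)) :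
    |∫ ω, ((g1 ω - g0 ω) + (D ω / m ω) * (Y ω - g1 ω)
        - ((1 - D ω) / (1 - m ω)) * (Y ω - g0 ω) - θ₀) ∂P|
      ≤ ε⁻¹ * √(∫ ω, (m ω - m₀ ω) ^ 2 ∂P) *
          (√(∫ ω, (g1 ω - g₀1 ω) ^ 2 ∂P) + √(∫ ω, (g0 ω - g₀0 ω) ^ 2 ∂P)) := by
  have hm_mem : MemLp m 2 P := memLp_of_bounded hmε (hm.mono h𝒢) 2
  have hD' : MemLp (1 - D) 2 P := (memLp_const 1).sub hD
  have hm' : AEStronglyMeasurable[𝒢] (1 - m) P := aestronglyMeasurable_const.sub hm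
  have hmε1 : ∀ᵐ ω ∂P, ε ≤ m ω := hmε.mono fun ω hω => hω.1
  have hmε0 : ∀ᵐ ω ∂P, ε ≤ (1 - m) ω := hmε.mono fun ω hω => le_sub_comm.1 hω.2
  have h_int1 := integrable_armScore (hm.mono h𝒢) hε hmε1 hDY (hg1_mem.integrable one_le_two)
    (hg1_mem.integrable_mul hD)
  have h_int0 := integrable_armScore (hm'.mono h𝒢) hε hmε0 hDY' (hg0_mem.integrable one_le_two)
    (hg0_mem.integrable_mul hD')
  have h_arm1 := abs_integral_armScore_sub_integral_le h𝒢 hm hm_mem hε hmε1 hD hDY hm₀ hg₀1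
    hg₀1_mem hg1 hg1_mem
  have h_arm0 := abs_integral_armScore_sub_integral_le h𝒢 hm' ((memLp_const 1).sub hm_mem) hε
    hmε0 hD' hDY' (one_sub_ae_eq_condExp_one_sub h𝒢 (hD.integrable one_le_two) hm₀) hg₀0 hg₀0_mem
    hg0 hg0_mem
  have h_sq (ω : Ω) : ((1 - m) ω - (1 - m₀) ω) ^ 2 = (m ω - m₀ ω) ^ 2 := by
    simp only [Pi.sub_apply]
    ring
  simp only [h_sq] at h_arm0
  rw [integral_aipw_eq_sub h_int1 h_int0, hθ₀, integral_sub (hg₀1_mem.integrable one_le_two)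
    (hg₀0_mem.integrable one_le_two), sub_sub_sub_comm, mul_assoc, mul_add, mul_add]
  exact (abs_sub _ _).trans (add_le_add h_arm1 h_arm0)

/-- Product-rate bias bound for the AIPW score: the bias is controlled by the product of
the L² estimation errors of the propensity score and the outcome regressions. -/
theorem aipw_product_rate_bias_bound
    {Ω 𝓧 : Type*} [MeasurableSpace Ω] [MeasurableSpace 𝓧]
    (P : MeasureTheory.Measure Ω) [MeasureTheory.IsProbabilityMeasure P]
    (X : Ω → 𝓧) (hX : Measurable X)
    (D : Ω → ℝ) (hD : Measurable D) (hD01 : ∀ ω, D ω = 0 ∨ D ω = 1)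
    (Y : Ω → ℝ) (hY : MeasureTheory.Integrable Y P)
    (hDY : MeasureTheory.Integrable (fun ω => D ω * Y ω) P)
    (hDY' : MeasureTheory.Integrable (fun ω => (1 - D ω) * Y ω) P)
    (ε : ℝ) (hε0 : 0 < ε) (hε : ε < 1 / 2)
    (m₀ : 𝓧 → ℝ) (hm₀ : Measurable m₀)
    (hm₀bd : ∀ x, ε ≤ m₀ x ∧ m₀ x ≤ 1 - ε)
    (hm₀ver : (fun ω => m₀ (X ω)) =ᵐ[P] P[D | MeasurableSpace.comap X inferInstance])
    (g₀1 g₀0 : 𝓧 → ℝ) (hg₀1 : Measurable g₀1) (hg₀0 : Measurable g₀0)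
    (C₀ : ℝ) (hg₀1bd : ∀ x, |g₀1 x| ≤ C₀) (hg₀0bd : ∀ x, |g₀0 x| ≤ C₀)
    (hg₀1ver : (fun ω => m₀ (X ω) * g₀1 (X ω))
      =ᵐ[P] P[fun ω => D ω * Y ω | MeasurableSpace.comap X inferInstance])
    (hg₀0ver : (fun ω => (1 - m₀ (X ω)) * g₀0 (X ω))
      =ᵐ[P] P[fun ω => (1 - D ω) * Y ω | MeasurableSpace.comap X inferInstance])
    (θ₀ : ℝ) (hθ₀ : θ₀ = ∫ ω, (g₀1 (X ω) - g₀0 (X ω)) ∂P)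
    (g1 g0 : 𝓧 → ℝ) (hg1 : Measurable g1) (hg0 : Measurable g0)
    (C₁ : ℝ) (hg1bd : ∀ x, |g1 x| ≤ C₁) (hg0bd : ∀ x, |g0 x| ≤ C₁)
    (m : 𝓧 → ℝ) (hm : Measurable m) (hmbd : ∀ x, ε ≤ m x ∧ m x ≤ 1 - ε) :
    |∫ ω, ((g1 (X ω) - g0 (X ω)) + (D ω / m (X ω)) * (Y ω - g1 (X ω))
        - ((1 - D ω) / (1 - m (X ω))) * (Y ω - g0 (X ω)) - θ₀) ∂P|
      ≤ ε⁻¹ * Real.sqrt (∫ ω, (m (X ω) - m₀ (X ω)) ^ 2 ∂P) *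
          (Real.sqrt (∫ ω, (g1 (X ω) - g₀1 (X ω)) ^ 2 ∂P)
            + Real.sqrt (∫ ω, (g0 (X ω) - g₀0 (X ω)) ^ 2 ∂P)) := by
  have hL2 {f : 𝓧 → ℝ} {C : ℝ} (hf : Measurable f) (hC : ∀ x, |f x| ≤ C) :
      MemLp (fun ω => f (X ω)) 2 P := memLp_comp_of_abs_le hX hf hC 2
  have hσX {f : 𝓧 → ℝ} (hf : Measurable f) :
      AEStronglyMeasurable[MeasurableSpace.comap X inferInstance] (fun ω => f (X ω)) P :=
    (hf.comp (comap_measurable X)).aestronglyMeasurable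
  exact aipw_product_rate_bias_bound_general hX.comap_le
    (memLp_of_eq_zero_or_one hD.aestronglyMeasurable (.of_forall hD01) 2) hDY hDY' hm₀ver
    hg₀1ver hg₀0ver (hL2 hg₀1 hg₀1bd) (hL2 hg₀0 hg₀0bd) hθ₀ (hσX hg1) (hσX hg0)
    (hL2 hg1 hg1bd) (hL2 hg0 hg0bd) hε0 (hσX hm) (.of_forall fun ω => hmbd (X ω))
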